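/- arXiv:2003.02030 — 2 statements merged into one kernel-verified Lean document; each statement's English description precedes it below -/
import Mathlib

section
/- Let X and Y be compact metric spaces, ν a Borel probability measure on X with supp(ν) = X, and φ : X × Y → ℝ a continuous function. Let π₀ be a Borel probability measure on X × Y such that e^φ is a ν-Jacobian of π₀. If π₀ assigns positive measure to every nonempty open subset of X × Y, then φ is the unique continuous function such that e^φ is a ν-Jacobian of π₀. -/
/-!
Write `π₂` for the marginal of `π₀` on `Y`. Inserting indicator functions into the defining identity
shows that a `ν`-Jacobian of `π₀` is a density of `π₀` with respect to `ν × π₂`, so any two of them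
agree `ν × π₂`-almost everywhere. If `ν` and `π₂` charge every nonempty open set, then so does
`ν × π₂`, and continuous functions that agree almost everywhere for such a measure are equal.
-/

open MeasureTheory ENNReal

noncomputable section

/-- `J` is a `ν`-Jacobian of `pi₀`: it is measurable, nonnegative, satisfies
`∫ J(x,y) dν(x) = 1` for all `y`, and `∬ f(x,y) J(x,y) dν(x) dπ₀(x,y) = ∫ f dπ₀` for every
bounded measurable `f`. -/
def IsNuJacobianOf {X Y : Type*} [MeasurableSpace X] [MeasurableSpace Y]
    (ν : Measure X) (pi₀ : Measure (X × Y)) (J : X × Y → ℝ) : Prop :=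
  Measurable J ∧ (∀ p, 0 ≤ J p) ∧ (∀ y, (∫ x, J (x, y) ∂ν) = 1) ∧
    ∀ f : X × Y → ℝ, Measurable f → (∃ C, ∀ p, |f p| ≤ C) →
      (∫ p, (∫ x, f (x, p.2) * J (x, p.2) ∂ν) ∂pi₀) = ∫ p, f p ∂pi₀

namespace IsNuJacobianOf

variable {X Y : Type*} [MeasurableSpace X] [MeasurableSpace Y]
  {ν : Measure X} {π₀ : Measure (X × Y)} {J J₁ J₂ : X × Y → ℝ}

theorem integrable_section (hJ : IsNuJacobianOf ν π₀ J) (y : Y) :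
    Integrable (fun x ↦ J (x, y)) ν := by
  have ⟨_, _, integral_section, _⟩ := hJ
  exact .of_integral_ne_zero (by simp [integral_section y])

theorem integrable_prod_snd [SFinite ν] [IsFiniteMeasure π₀] (hJ : IsNuJacobianOf ν π₀ J) :
    Integrable J (ν.prod π₀.snd) := by
  have ⟨measurable, nonneg, integral_section, _⟩ := hJ
  refine (integrable_prod_iff' measurable.aestronglyMeasurable).2
    ⟨.of_forall hJ.integrable_section, ?_⟩
  simp only [Real.norm_of_nonneg, nonneg, integral_section]
  exact integrable_const 1

theorem setIntegral_prod_snd [SFinite ν] [IsFiniteMeasure π₀] (hJ : IsNuJacobianOf ν π₀ J)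
    {s : Set (X × Y)} (hs : MeasurableSet s) :
    ∫ p in s, J p ∂ν.prod π₀.snd = π₀.real s := by
  have ⟨measurable, _, _, integral_mul⟩ := hJ
  have stronglyMeasurable_inner :
      StronglyMeasurable fun y ↦ ∫ x, s.indicator J (x, y) ∂ν :=
    (measurable.indicator hs).stronglyMeasurable.integral_prod_left'
  calc ∫ p in s, J p ∂ν.prod π₀.snd
      = ∫ p, s.indicator J p ∂ν.prod π₀.snd := (integral_indicator hs).symm
    _ = ∫ y, ∫ x, s.indicator J (x, y) ∂ν ∂π₀.snd :=
        integral_prod_symm _ (hJ.integrable_prod_snd.indicator hs)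
    _ = ∫ p, ∫ x, s.indicator J (x, p.2) ∂ν ∂π₀ :=
        integral_map measurable_snd.aemeasurable stronglyMeasurable_inner.aestronglyMeasurable
    _ = ∫ p, ∫ x, s.indicator 1 (x, p.2) * J (x, p.2) ∂ν ∂π₀ := by
        simp only [← Set.indicator_mul_left, Pi.one_apply, one_mul]
    _ = ∫ p, s.indicator 1 p ∂π₀ :=
        integral_mul _ (measurable_one.indicator hs)
          ⟨1, fun p ↦ by by_cases hp : p ∈ s <;> simp [hp]⟩
    _ = π₀.real s := integral_indicator_one hs

theorem ae_eq [SFinite ν] [IsFiniteMeasure π₀] (hJ₁ : IsNuJacobianOf ν π₀ J₁)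
    (hJ₂ : IsNuJacobianOf ν π₀ J₂) : J₁ =ᵐ[ν.prod π₀.snd] J₂ :=
  hJ₁.integrable_prod_snd.ae_eq_of_forall_setIntegral_eq _ _ hJ₂.integrable_prod_snd
    fun _ hs _ ↦ (hJ₁.setIntegral_prod_snd hs).trans (hJ₂.setIntegral_prod_snd hs).symm

end IsNuJacobianOf

theorem statement13_general {X Y : Type*}
    [TopologicalSpace X] [MeasurableSpace X] [TopologicalSpace Y] [MeasurableSpace Y]
    {ν : Measure X} [SFinite ν] [ν.IsOpenPosMeasure]
    {π₀ : Measure (X × Y)} [IsFiniteMeasure π₀] [π₀.snd.IsOpenPosMeasure]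
    {J₁ J₂ : X × Y → ℝ} (hc₁ : Continuous J₁) (hc₂ : Continuous J₂)
    (hJ₁ : IsNuJacobianOf ν π₀ J₁) (hJ₂ : IsNuJacobianOf ν π₀ J₂) : J₁ = J₂ :=
  (hc₁.ae_eq_iff_eq (ν.prod π₀.snd) hc₂).1 (hJ₁.ae_eq hJ₂)

/-- if `supp ν = X`, `φ` is continuous, `e^φ` is a `ν`-Jacobian of `π₀`, and `π₀`
is positive on nonempty open sets, then `φ` is the unique continuous function whose exponential
is a `ν`-Jacobian of `π₀`. -/
theorem statement13 {X Y : Type*}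
    [MetricSpace X] [CompactSpace X] [MeasurableSpace X] [BorelSpace X]
    [MetricSpace Y] [CompactSpace Y] [MeasurableSpace Y] [BorelSpace Y]
    (ν : Measure X) [IsProbabilityMeasure ν] [ν.IsOpenPosMeasure]
    (pi₀ : Measure (X × Y)) [IsProbabilityMeasure pi₀]
    (hpos : ∀ U : Set (X × Y), IsOpen U → U.Nonempty → 0 < pi₀ U)
    (φ : X × Y → ℝ) (hφ : Continuous φ)
    (hjac : IsNuJacobianOf ν pi₀ (fun p => Real.exp (φ p))) :
    ∀ φ₂ : X × Y → ℝ, Continuous φ₂ →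
      IsNuJacobianOf ν pi₀ (fun p => Real.exp (φ₂ p)) → φ₂ = φ := by
  intro φ₂ hφ₂ hjac₂
  have : Nonempty X := ν.nonempty_of_neZero
  have : pi₀.IsOpenPosMeasure := ⟨fun U hU hne ↦ (hpos U hU hne).ne'⟩
  have : pi₀.snd.IsOpenPosMeasure :=
    continuous_snd.isOpenPosMeasure_map Prod.snd_surjective
  have exp_eq := statement13_general hφ₂.rexp hφ.rexp hjac₂ hjac
  exact funext fun p ↦ Real.exp_injective (congrFun exp_eq p)

end
end

section
/- Let X and Y be compact metric spaces and π₀ a Borel probability measure on X × Y that assigns positive measure to every nonempty open set, with x-marginal P. Let ν be a Borel probability on X with supp(ν) = X and φ : X × Y → ℝ a continuous function such that e^φ is a ν-Jacobian of π₀, and let ψ = φ − log(dP/dν). Then for every Borel probability measure π on X × Y, −∫ ψ dπ − H^P(π) = −∫ φ dπ − H^ν(π); that is, the information gain IG(π, π₀) := −∫ ψ dπ − H^P(π) can be computed using any a priori probability ν admitting a continuous ν-Jacobian e^φ for π₀. -/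
open MeasureTheory ENNReal ProbabilityTheory

noncomputable section
open scoped Classical

/-- The extended-real integral `∫ f⁺ dμ − ∫ f⁻ dμ`, valued in `EReal`. -/
def eInt {α : Type*} [MeasurableSpace α] (μ : Measure α) (f : α → ℝ) : EReal :=
  ((∫⁻ x, ENNReal.ofReal (f x) ∂μ : ℝ≥0∞) : EReal)
    - ((∫⁻ x, ENNReal.ofReal (-f x) ∂μ : ℝ≥0∞) : EReal)

/-- The extended integral of `f` with respect to `μ` is well defined (not `+∞ − ∞`). -/
def IntWellDef {α : Type*} [MeasurableSpace α] (μ : Measure α) (f : α → ℝ) : Prop :=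
  (∫⁻ x, ENNReal.ofReal (f x) ∂μ ≠ ⊤) ∨ (∫⁻ x, ENNReal.ofReal (-f x) ∂μ ≠ ⊤)

/-- Kullback–Leibler divergence `D_KL(μ | ν) = ∫ log (dμ/dν) dμ` if `μ ≪ ν`, `+∞` otherwise. -/
def KL {α : Type*} [MeasurableSpace α] (μ ν : Measure α) : EReal :=
  if μ ≪ ν then eInt μ (fun x => Real.log ((μ.rnDeriv ν x).toReal)) else ⊤

/-- `S^ν(P) = −sup{∫ c dP : c measurable, ∫ e^c dν = 1, ∫ c dP well defined}`. -/
def SEnt {X : Type*} [MeasurableSpace X] (ν P : Measure X) : EReal :=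
  - sSup { r : EReal | ∃ c : X → ℝ, Measurable c ∧ (∫ x, Real.exp (c x) ∂ν) = 1 ∧
      IntWellDef P c ∧ r = eInt P c }

/-- `H^{ν̂}(π)`: entropy of `π` relative to the probability kernel `ν̂ = κ`, i.e. minus the
supremum of `∫ c dπ` over `κ`-normalized measurable functions with well-defined integral. -/
def Hker {X Y : Type*} [MeasurableSpace X] [MeasurableSpace Y]
    (κ : Kernel Y X) (π : Measure (X × Y)) : EReal :=
  - sSup { r : EReal | ∃ c : X × Y → ℝ, Measurable c ∧
      (∀ y, (∫ x, Real.exp (c (x, y)) ∂(κ y)) = 1) ∧ IntWellDef π c ∧ r = eInt π c }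

/-- `H^ν(π)`: entropy of `π` relative to an a priori probability `ν` on `X`. -/
def Hnu {X Y : Type*} [MeasurableSpace X] [MeasurableSpace Y]
    (ν : Measure X) (π : Measure (X × Y)) : EReal :=
  - sSup { r : EReal | ∃ c : X × Y → ℝ, Measurable c ∧
      (∀ y, (∫ x, Real.exp (c (x, y)) ∂ν) = 1) ∧ IntWellDef π c ∧ r = eInt π c }

/-- The probability `ν̂ dQ` on `X × Y`, defined by
`∫ f d(ν̂ dQ) = ∫_Y ∫_X f(x,y) dν̂^y(x) dQ(y)`. -/
def kernMeas {X Y : Type*} [MeasurableSpace X] [MeasurableSpace Y]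
    (κ : Kernel Y X) (Q : Measure Y) : Measure (X × Y) :=
  (Q.compProd κ).map Prod.swap

/-!
The Jacobian identity says `π₀ = e^φ · (ν ⊗ Q)`, so integrating out `y` gives `P = g · ν` with
`g x = ∫ e^{φ(x,y)} dQ(y)`. A function `c` is `P`-normalized iff `c + log g` is `ν`-normalized, and
this shift changes `∫ c dπ` by the finite amount `∫ log g dπ`. Hence
`H^P(π) = H^ν(π) + ∫ log g dπ`, which is exactly what replacing `φ` by `ψ = φ − log g` compensates.
-/

section ExtendedIntegral

/- This is `(a + b)⁺ - (a + b)⁻ = (a⁺ - a⁻) + (b⁺ - b⁻)`, rearranged so that no truncated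
subtraction occurs in `ℝ≥0∞`. -/
lemma ofReal_add_add_ofReal_neg_add_ofReal_neg (a b : ℝ) :
    ENNReal.ofReal (a + b) + (ENNReal.ofReal (-a) + ENNReal.ofReal (-b)) =
      ENNReal.ofReal (-(a + b)) + (ENNReal.ofReal a + ENNReal.ofReal b) := by
  have ofReal_eq (t : ℝ) : ENNReal.ofReal t = ENNReal.ofReal (max t 0) := by simp
  rw [ofReal_eq (a + b), ofReal_eq (-a), ofReal_eq (-b), ofReal_eq (-(a + b)), ofReal_eq a,
    ofReal_eq b]
  repeat rw [← ENNReal.ofReal_add (by positivity) (by positivity)]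
  congr 1
  linarith [max_zero_sub_max_neg_zero_eq_self (a + b), max_zero_sub_max_neg_zero_eq_self a,
    max_zero_sub_max_neg_zero_eq_self b]

lemma ereal_sub_eq_sub_of_add_eq_add {a b c d : ℝ≥0∞} (hac : a ≤ c) (hbd : b ≤ d)
    (h : a + d = b + c) (hfin : c ≠ ⊤ ∨ d ≠ ⊤) : (a : EReal) - b = c - d := by
  wlog hc : c ≠ ⊤ generalizing a b c d
  · have hd := hfin.resolve_left hc
    have swapped := congrArg (- ·) (this hbd hac h.symm hfin.symm hd)
    rwa [EReal.neg_sub (by simp) (by simp [ne_top_of_le_ne_top hd hbd]),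
      EReal.neg_sub (by simp) (by simp [hd]), add_comm, ← sub_eq_add_neg, add_comm,
      ← sub_eq_add_neg] at swapped
  have ha : a ≠ ⊤ := ne_top_of_le_ne_top hc hac
  have top_iff : b = ⊤ ↔ d = ⊤ := by
    simpa [ha, hc] using (congrArg (· = ⊤) h).symm
  by_cases hd : d = ⊤
  · simp [top_iff.2 hd, hd]
  have hb : b ≠ ⊤ := mt top_iff.1 hd
  have h_real : a.toReal + d.toReal = b.toReal + c.toReal := by
    rw [← ENNReal.toReal_add ha hd, h, ENNReal.toReal_add hb hc]
  rw [← EReal.coe_ennreal_toReal ha, ← EReal.coe_ennreal_toReal hb,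
    ← EReal.coe_ennreal_toReal hc, ← EReal.coe_ennreal_toReal hd, ← EReal.coe_sub,
    ← EReal.coe_sub, sub_eq_sub_iff_add_eq_add.2 (h_real.trans (add_comm _ _))]

variable {α : Type*} [MeasurableSpace α] {μ : Measure α} {c h : α → ℝ}

lemma lintegral_ofReal_add_le (hc : AEMeasurable c μ) :
    ∫⁻ x, ENNReal.ofReal (c x + h x) ∂μ ≤
      ∫⁻ x, ENNReal.ofReal (c x) ∂μ + ∫⁻ x, ENNReal.ofReal (h x) ∂μ := by
  rw [← lintegral_add_left' hc.ennreal_ofReal]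
  exact lintegral_mono fun _ => ENNReal.ofReal_add_le

lemma lintegral_ofReal_neg_add_le (hc : AEMeasurable c μ) :
    ∫⁻ x, ENNReal.ofReal (-(c x + h x)) ∂μ ≤
      ∫⁻ x, ENNReal.ofReal (-c x) ∂μ + ∫⁻ x, ENNReal.ofReal (-h x) ∂μ := by
  simpa only [neg_add, Pi.neg_apply] using lintegral_ofReal_add_le (h := fun x => -h x) hc.neg

lemma IntWellDef.add_integrable (hw : IntWellDef μ c) (hc : AEMeasurable c μ)
    (hh : Integrable h μ) : IntWellDef μ (fun x => c x + h x) := by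
  refine hw.imp (fun hpos => ?_) fun hneg => ?_
  · exact ne_top_of_le_ne_top (ENNReal.add_ne_top.2 ⟨hpos, hh.lintegral_lt_top.ne⟩)
      (lintegral_ofReal_add_le hc)
  · exact ne_top_of_le_ne_top (ENNReal.add_ne_top.2 ⟨hneg, hh.neg.lintegral_lt_top.ne⟩)
      (lintegral_ofReal_neg_add_le hc)

lemma lintegral_ofReal_add_balance (hc : AEMeasurable c μ) (hh : AEMeasurable h μ) :
    ∫⁻ x, ENNReal.ofReal (c x + h x) ∂μ +
        (∫⁻ x, ENNReal.ofReal (-c x) ∂μ + ∫⁻ x, ENNReal.ofReal (-h x) ∂μ) =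
      ∫⁻ x, ENNReal.ofReal (-(c x + h x)) ∂μ +
        (∫⁻ x, ENNReal.ofReal (c x) ∂μ + ∫⁻ x, ENNReal.ofReal (h x) ∂μ) := by
  repeat rw [← lintegral_add_left' (by fun_prop)]
  exact lintegral_congr fun x => ofReal_add_add_ofReal_neg_add_ofReal_neg (c x) (h x)

lemma eInt_eq_coe_integral (hh : Integrable h μ) : eInt μ h = ((∫ x, h x ∂μ : ℝ) : EReal) := by
  have h_pos : ∫⁻ x, ENNReal.ofReal (h x) ∂μ ≠ ⊤ := hh.lintegral_lt_top.ne
  have h_neg : ∫⁻ x, ENNReal.ofReal (-h x) ∂μ ≠ ⊤ := hh.neg.lintegral_lt_top.ne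
  rw [integral_eq_lintegral_pos_part_sub_lintegral_neg_part hh, EReal.coe_sub,
    EReal.coe_ennreal_toReal h_pos, EReal.coe_ennreal_toReal h_neg, eInt]

lemma eInt_add_integrable (hw : IntWellDef μ c) (hc : AEMeasurable c μ) (hh : Integrable h μ) :
    eInt μ (fun x => c x + h x) = eInt μ c + ((∫ x, h x ∂μ : ℝ) : EReal) := by
  have h_pos : ∫⁻ x, ENNReal.ofReal (h x) ∂μ ≠ ⊤ := hh.lintegral_lt_top.ne
  have h_neg : ∫⁻ x, ENNReal.ofReal (-h x) ∂μ ≠ ⊤ := hh.neg.lintegral_lt_top.ne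
  rw [← eInt_eq_coe_integral hh]
  unfold eInt
  rw [← EReal.add_sub_add_comm (by simp) (by simp), ← EReal.coe_ennreal_add,
    ← EReal.coe_ennreal_add]
  exact ereal_sub_eq_sub_of_add_eq_add (lintegral_ofReal_add_le hc)
    (lintegral_ofReal_neg_add_le hc) (lintegral_ofReal_add_balance hc hh.aemeasurable)
    (hw.imp (fun hp => ENNReal.add_ne_top.2 ⟨hp, h_pos⟩)
      fun hn => ENNReal.add_ne_top.2 ⟨hn, h_neg⟩)

end ExtendedIntegral

section ChangeOfReference

variable {X Y : Type*} [MeasurableSpace X] [MeasurableSpace Y]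

lemma integral_withDensity_exp {ν : Measure X} {h : X → ℝ} (hh : Measurable h) (f : X → ℝ) :
    ∫ x, f x ∂(ν.withDensity fun x => ENNReal.ofReal (Real.exp (h x))) =
      ∫ x, Real.exp (h x) * f x ∂ν := by
  rw [integral_withDensity_eq_integral_toReal_smul (by fun_prop) (by simp)]
  simp only [ENNReal.toReal_ofReal (Real.exp_nonneg _), smul_eq_mul]

lemma withDensity_exp_withDensity_exp_neg (ν : Measure X) {h : X → ℝ} (hh : Measurable h) :
    (ν.withDensity fun x => ENNReal.ofReal (Real.exp (h x))).withDensity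
      (fun x => ENNReal.ofReal (Real.exp (-h x))) = ν := by
  rw [← withDensity_mul _ (by fun_prop) (by fun_prop)]
  convert withDensity_one
  ext x
  simp [← ENNReal.ofReal_mul (Real.exp_nonneg _), ← Real.exp_add]

lemma Hnu_add_integral_le_Hnu_withDensity_exp (ν : Measure X) {π : Measure (X × Y)} {h : X → ℝ}
    (hh : Measurable h) (hint : Integrable (fun p => h p.1) π) :
    Hnu ν π + ((∫ p, h p.1 ∂π : ℝ) : EReal) ≤
      Hnu (ν.withDensity fun x => ENNReal.ofReal (Real.exp (h x))) π := by
  unfold Hnu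
  rw [EReal.le_neg, EReal.neg_add (by simp) (by simp), neg_neg]
  refine sSup_le ?_
  rintro _ ⟨c, hc, hnorm, hw, rfl⟩
  rw [EReal.le_sub_iff_add_le (by simp) (by simp), ← eInt_add_integrable hw hc.aemeasurable hint]
  refine le_sSup ⟨_, by fun_prop, fun y => ?_, hw.add_integrable hc.aemeasurable hint, rfl⟩
  rw [← hnorm y, integral_withDensity_exp hh]
  simp only [Real.exp_add, mul_comm]

lemma Hnu_withDensity_exp (ν : Measure X) {π : Measure (X × Y)} {h : X → ℝ}
    (hh : Measurable h) (hint : Integrable (fun p => h p.1) π) :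
    Hnu (ν.withDensity fun x => ENNReal.ofReal (Real.exp (h x))) π =
      Hnu ν π + ((∫ p, h p.1 ∂π : ℝ) : EReal) := by
  refine le_antisymm ?_ (Hnu_add_integral_le_Hnu_withDensity_exp ν hh hint)
  have reverse := Hnu_add_integral_le_Hnu_withDensity_exp
    (ν.withDensity fun x => ENNReal.ofReal (Real.exp (h x))) hh.neg hint.neg
  simp only [Pi.neg_apply, withDensity_exp_withDensity_exp_neg ν hh, integral_neg, EReal.coe_neg,
    ← sub_eq_add_neg] at reverse
  exact (EReal.sub_le_iff_le_add (by simp) (by simp)).1 reverse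

end ChangeOfReference

section Jacobian

variable {X Y : Type*} [MeasurableSpace X] [MeasurableSpace Y]

lemma map_fst_withDensity_prod (μ : Measure X) [SFinite μ] (κ : Measure Y) [SFinite κ]
    {f : X × Y → ℝ≥0∞} (hf : Measurable f) :
    ((μ.prod κ).withDensity f).map Prod.fst = μ.withDensity fun x => ∫⁻ y, f (x, y) ∂κ := by
  ext A hA
  rw [Measure.map_apply measurable_fst hA, withDensity_apply _ (measurable_fst hA),
    withDensity_apply _ hA, ← Set.prod_univ, setLIntegral_prod _ hf.aemeasurable]
  simp only [Measure.restrict_univ]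

variable {ν : Measure X} {pi₀ : Measure (X × Y)} {J : X × Y → ℝ}

namespace IsNuJacobianOf

lemma integrable_slice (hJ : IsNuJacobianOf ν pi₀ J) (y : Y) :
    Integrable (fun x => J (x, y)) ν :=
  integrable_of_integral_eq_one (hJ.2.2.1 y)

lemma ofReal_integral_indicator (hJ : IsNuJacobianOf ν pi₀ J) {S : Set (X × Y)}
    (hS : MeasurableSet S) (y : Y) :
    ENNReal.ofReal (∫ x, S.indicator J (x, y) ∂ν) =
      ∫⁻ x, S.indicator (fun p => ENNReal.ofReal (J p)) (x, y) ∂ν := by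
  have h_int : Integrable (fun x => S.indicator J (x, y)) ν :=
    (hJ.integrable_slice y).indicator (measurable_prodMk_right hS)
  have h_comp (p : X × Y) : ENNReal.ofReal (S.indicator J p) =
      S.indicator (fun q => ENNReal.ofReal (J q)) p :=
    (congrFun (Set.indicator_comp_of_zero ENNReal.ofReal_zero) p).symm
  rw [ofReal_integral_eq_lintegral_ofReal h_int
    (.of_forall fun x => Set.indicator_nonneg (fun p _ => hJ.2.1 p) (x, y))]
  simp only [h_comp]

lemma integral_indicator_mem_Icc (hJ : IsNuJacobianOf ν pi₀ J) {S : Set (X × Y)}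
    (hS : MeasurableSet S) (y : Y) : ∫ x, S.indicator J (x, y) ∂ν ∈ Set.Icc 0 1 := by
  refine ⟨integral_nonneg fun x => Set.indicator_nonneg (fun p _ => hJ.2.1 p) (x, y), ?_⟩
  rw [← hJ.2.2.1 y]
  exact integral_mono ((hJ.integrable_slice y).indicator (measurable_prodMk_right hS))
    (hJ.integrable_slice y) fun x => Set.indicator_le_self' (fun p _ => hJ.2.1 p) (x, y)

lemma integral_integral_indicator (hJ : IsNuJacobianOf ν pi₀ J) {S : Set (X × Y)}
    (hS : MeasurableSet S) : ∫ p, ∫ x, S.indicator J (x, p.2) ∂ν ∂pi₀ = pi₀.real S := by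
  have h_jac := hJ.2.2.2 (S.indicator 1) (measurable_one.indicator hS)
    ⟨1, fun p => (norm_indicator_le_norm_self (1 : X × Y → ℝ) p).trans (by simp)⟩
  rw [integral_indicator_one hS] at h_jac
  simpa only [← Set.indicator_mul_left, Pi.one_apply, one_mul] using h_jac

lemma lintegral_lintegral_indicator [SFinite ν] [IsFiniteMeasure pi₀]
    (hJ : IsNuJacobianOf ν pi₀ J) {S : Set (X × Y)} (hS : MeasurableSet S) :
    ∫⁻ p, ∫⁻ x, S.indicator (fun p => ENNReal.ofReal (J p)) (x, p.2) ∂ν ∂pi₀ = pi₀ S := by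
  have h_meas : Measurable fun y => ∫ x, S.indicator J (x, y) ∂ν :=
    (hJ.1.indicator hS).stronglyMeasurable.integral_prod_left'.measurable
  have h_int : Integrable (fun p : X × Y => ∫ x, S.indicator J (x, p.2) ∂ν) pi₀ :=
    .of_mem_Icc 0 1 (h_meas.comp measurable_snd).aemeasurable
      (.of_forall fun p => hJ.integral_indicator_mem_Icc hS p.2)
  simp only [← hJ.ofReal_integral_indicator hS]
  rw [← ofReal_integral_eq_lintegral_ofReal h_int
    (.of_forall fun p => (hJ.integral_indicator_mem_Icc hS p.2).1),
    hJ.integral_integral_indicator hS, ofReal_measureReal]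

lemma eq_withDensity_prod [SFinite ν] [IsFiniteMeasure pi₀] (hJ : IsNuJacobianOf ν pi₀ J) :
    pi₀ = (ν.prod (pi₀.map Prod.snd)).withDensity fun p => ENNReal.ofReal (J p) := by
  ext S hS
  have h_meas : Measurable (S.indicator fun p => ENNReal.ofReal (J p)) :=
    hJ.1.ennreal_ofReal.indicator hS
  rw [withDensity_apply _ hS, ← lintegral_indicator hS, lintegral_prod_symm' _ h_meas,
    lintegral_map h_meas.lintegral_prod_left' measurable_snd,
    hJ.lintegral_lintegral_indicator hS]

lemma map_fst_eq_withDensity [SFinite ν] [IsFiniteMeasure pi₀] (hJ : IsNuJacobianOf ν pi₀ J) :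
    pi₀.map Prod.fst =
      ν.withDensity fun x => ∫⁻ y, ENNReal.ofReal (J (x, y)) ∂(pi₀.map Prod.snd) := by
  conv_lhs => rw [hJ.eq_withDensity_prod]
  exact map_fst_withDensity_prod ν _ hJ.1.ennreal_ofReal

end IsNuJacobianOf

lemma ofReal_exp_log_integral_exp {κ : Measure Y} [NeZero κ] {f : Y → ℝ}
    (hf : Integrable (fun y => Real.exp (f y)) κ) :
    ENNReal.ofReal (Real.exp (Real.log (∫ y, Real.exp (f y) ∂κ))) =
      ∫⁻ y, ENNReal.ofReal (Real.exp (f y)) ∂κ := by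
  rw [Real.exp_log (integral_exp_pos hf),
    ofReal_integral_eq_lintegral_ofReal hf (.of_forall fun y => Real.exp_nonneg _)]

end Jacobian

section CompactSpace

lemma integrable_of_continuous_of_compactSpace {Z : Type*} [TopologicalSpace Z] [CompactSpace Z]
    [MeasurableSpace Z] [OpensMeasurableSpace Z] {μ : Measure Z} [IsFiniteMeasure μ]
    {E : Type*} [NormedAddCommGroup E] {f : Z → E} (hf : Continuous f) : Integrable f μ :=
  hf.integrable_of_hasCompactSupport (.of_compactSpace f)

lemma continuous_log_integral_exp {X Y : Type*}
    [TopologicalSpace X] [FirstCountableTopology X] [LocallyCompactSpace X]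
    [TopologicalSpace Y] [CompactSpace Y] [MeasurableSpace Y] [OpensMeasurableSpace Y]
    {κ : Measure Y} [IsFiniteMeasure κ] [NeZero κ] {φ : X × Y → ℝ} (hφ : Continuous φ) :
    Continuous fun x => Real.log (∫ y, Real.exp (φ (x, y)) ∂κ) := by
  have h_cont : Continuous fun x => ∫ y, Real.exp (φ (x, y)) ∂κ := by
    simpa only [Measure.restrict_univ] using continuous_parametric_integral_of_continuous
      (f := fun x y => Real.exp (φ (x, y))) (μ := κ) hφ.rexp isCompact_univ
  exact h_cont.log fun x =>
    (integral_exp_pos (integrable_of_continuous_of_compactSpace (by fun_prop))).ne'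

end CompactSpace

theorem statement14_general {X Y : Type*} [MeasurableSpace X] [MeasurableSpace Y]
    (ν : Measure X) [SFinite ν] (pi₀ : Measure (X × Y)) [IsProbabilityMeasure pi₀]
    (P : Measure X) (Q : Measure Y)
    (hP : pi₀.map Prod.fst = P) (hQ : pi₀.map Prod.snd = Q)
    (φ : X × Y → ℝ) (hjac : IsNuJacobianOf ν pi₀ (fun p => Real.exp (φ p)))
    (hφQ : ∀ x, Integrable (fun y => Real.exp (φ (x, y))) Q)
    (pi : Measure (X × Y)) (hφ : Integrable φ pi)
    (hlog : Integrable (fun p => Real.log (∫ y, Real.exp (φ (p.1, y)) ∂Q)) pi) :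
    - ((∫ p, (φ p - Real.log (∫ y, Real.exp (φ (p.1, y)) ∂Q)) ∂pi : ℝ) : EReal) - Hnu P pi
      = - ((∫ p, φ p ∂pi : ℝ) : EReal) - Hnu ν pi := by
  have : IsProbabilityMeasure Q := hQ ▸ Measure.isProbabilityMeasure_map (by fun_prop)
  set logDensity : X → ℝ := fun x => Real.log (∫ y, Real.exp (φ (x, y)) ∂Q)
  have logDensity_meas : Measurable logDensity :=
    hjac.1.stronglyMeasurable.integral_prod_right'.measurable.log
  have P_eq : P = ν.withDensity fun x => ENNReal.ofReal (Real.exp (logDensity x)) := by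
    simp only [logDensity, ofReal_exp_log_integral_exp (hφQ _)]
    rw [← hP, ← hQ, hjac.map_fst_eq_withDensity]
  rw [P_eq, Hnu_withDensity_exp ν logDensity_meas hlog, integral_sub hφ hlog, EReal.coe_sub,
    EReal.neg_sub (by simp) (by simp), EReal.add_sub_add_comm (by simp) (by simp),
    EReal.sub_self (by simp) (by simp), add_zero]

/-- for `π₀` positive on open sets with `x`-marginal `P`, an a priori
probability `ν` of full support, and a continuous `φ` with `e^φ` a `ν`-Jacobian of `π₀`,
setting `ψ = φ − log (dP/dν)` (where `dP/dν(x) = ∫ e^{φ(x,y)} dQ(y)`, `Q` the `y`-marginal of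
`π₀`), one has, for every Borel probability `π` on `X × Y`,
`−∫ ψ dπ − H^P(π) = −∫ φ dπ − H^ν(π)`: the information gain `IG(π, π₀)` can be computed using
any a priori probability `ν` admitting a continuous `ν`-Jacobian `e^φ` for `π₀`. -/
theorem statement14 {X Y : Type*}
    [MetricSpace X] [CompactSpace X] [MeasurableSpace X] [BorelSpace X]
    [MetricSpace Y] [CompactSpace Y] [MeasurableSpace Y] [BorelSpace Y]
    (ν : Measure X) [IsProbabilityMeasure ν] [ν.IsOpenPosMeasure]
    (pi₀ : Measure (X × Y)) [IsProbabilityMeasure pi₀]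
    (hpos : ∀ U : Set (X × Y), IsOpen U → U.Nonempty → 0 < pi₀ U)
    (P : Measure X) (Q : Measure Y)
    (hP : pi₀.map Prod.fst = P) (hQ : pi₀.map Prod.snd = Q)
    (φ : X × Y → ℝ) (hφ : Continuous φ)
    (hjac : IsNuJacobianOf ν pi₀ (fun p => Real.exp (φ p))) :
    ∀ pi : Measure (X × Y), IsProbabilityMeasure pi →
      - ((∫ p, (φ p - Real.log (∫ y, Real.exp (φ (p.1, y)) ∂Q)) ∂pi : ℝ) : EReal)
          - Hnu P pi
        = - ((∫ p, φ p ∂pi : ℝ) : EReal) - Hnu ν pi := by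
  intro pi hpi
  have : IsProbabilityMeasure Q := hQ ▸ Measure.isProbabilityMeasure_map (by fun_prop)
  exact statement14_general ν pi₀ P Q hP hQ φ hjac
    (fun x => integrable_of_continuous_of_compactSpace (by fun_prop)) pi
    (integrable_of_continuous_of_compactSpace hφ)
    (integrable_of_continuous_of_compactSpace
      ((continuous_log_integral_exp hφ).comp continuous_fst))

end
end
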